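/- Let q be an odd prime power, F = 𝔽_q(T), ξ ∈ 𝔽_q^× a non-square in 𝔽_q, and let 𝔯 ∈ 𝔽_q[T] be a product of at least one and finitely many pairwise distinct monic irreducible polynomials, each of odd degree. Then there is no element γ ∈ H(ξ,𝔯) satisfying both γ·i = −(i·γ) and Nr(γ) ∈ 𝔽_q^×. In particular, i and −i are not conjugate by any unit γ of the 𝔽_q[T]-subalgebra Λ of H(ξ,𝔯) spanned by 1, i, j, k. -/

import Mathlib

open Quaternion Polynomial

/-- Membership in the `𝔽_q[T]`-subalgebra `Λ` of `H(ξ,𝔯)` spanned by `1, i, j, k`: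
all four coordinates are polynomials. -/
def memLambda {Fq : Type*} [Field Fq] [Fintype Fq] {ξ r : RatFunc Fq}
    (x : ℍ[RatFunc Fq, ξ, r]) : Prop :=
  x.re ∈ (algebraMap (Polynomial Fq) (RatFunc Fq)).range ∧
  x.imI ∈ (algebraMap (Polynomial Fq) (RatFunc Fq)).range ∧
  x.imJ ∈ (algebraMap (Polynomial Fq) (RatFunc Fq)).range ∧
  x.imK ∈ (algebraMap (Polynomial Fq) (RatFunc Fq)).range

/-- The reduced norm `Nr(a + bi + cj + dk) = a² - ξb² - 𝔯c² + ξ𝔯d²` on `H(ξ,𝔯)`. -/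
noncomputable def quatNr {Fq : Type*} [Field Fq] [Fintype Fq] (ξ r : RatFunc Fq)
    (x : ℍ[RatFunc Fq, ξ, r]) : RatFunc Fq :=
  x.re ^ 2 - ξ * x.imI ^ 2 - r * x.imJ ^ 2 + ξ * r * x.imK ^ 2

/-- A non-square constant stays a non-square modulo an irreducible of odd degree. -/
lemma aux_dvd {Fq : Type*} [Field Fq] (ξ : Fq) (hns : ¬ ∃ u : Fq, u ^ 2 = ξ)
    (p : Polynomial Fq) (hp : Irreducible p) (hodd : Odd p.natDegree)
    (A B : Polynomial Fq) (h : p ∣ A ^ 2 - C ξ * B ^ 2) : p ∣ A ∧ p ∣ B := by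
  have : Fact (Irreducible p) := ⟨hp⟩
  have hB : p ∣ B := by
    by_contra hB
    have hB' : AdjoinRoot.mk p B ≠ 0 := by
      rwa [Ne, AdjoinRoot.mk_eq_zero]
    have h1 : AdjoinRoot.mk p (A ^ 2 - C ξ * B ^ 2) = 0 := AdjoinRoot.mk_eq_zero.mpr h
    rw [map_sub, map_mul, map_pow, map_pow, AdjoinRoot.mk_C] at h1
    have hirr : Irreducible (X ^ 2 - C ξ : Polynomial Fq) := by
      refine (X_pow_sub_C_irreducible_iff_of_prime Nat.prime_two).mpr ?_
      intro b hb
      exact hns ⟨b, hb⟩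
    have hfd : Module.Finite Fq (AdjoinRoot p) :=
      (AdjoinRoot.powerBasis hp.ne_zero).finite
    have hfr : Module.finrank Fq (AdjoinRoot p) = p.natDegree := by
      rw [(AdjoinRoot.powerBasis hp.ne_zero).finrank, AdjoinRoot.powerBasis_dim]
    let z : AdjoinRoot p := AdjoinRoot.mk p A / AdjoinRoot.mk p B
    have hz : z ^ 2 = AdjoinRoot.of p ξ := by
      simp only [z]
      rw [div_pow, div_eq_iff (pow_ne_zero 2 hB')]
      exact sub_eq_zero.mp h1
    have hmin : X ^ 2 - C ξ = minpoly Fq z := by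
      refine minpoly.eq_of_irreducible_of_monic hirr ?_ (monic_X_pow_sub_C ξ two_ne_zero)
      simp [hz, AdjoinRoot.algebraMap_eq]
    have hd : (minpoly Fq z).natDegree ∣ Module.finrank Fq (AdjoinRoot p) :=
      minpoly.degree_dvd (Algebra.IsIntegral.isIntegral z)
    rw [← hmin, natDegree_X_pow_sub_C, hfr] at hd
    exact (Nat.not_even_iff_odd.mpr hodd) (even_iff_two_dvd.mpr hd)
  refine ⟨?_, hB⟩
  have h2 : p ∣ A ^ 2 := by
    have : p ∣ C ξ * B ^ 2 := (hB.pow two_ne_zero).mul_left _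
    simpa using dvd_add h this
  exact hp.prime.dvd_of_dvd_pow h2

/-- Infinite descent at `p`. -/
lemma aux_descent {Fq : Type*} [Field Fq] (ξ : Fq) (hns : ¬ ∃ u : Fq, u ^ 2 = ξ)
    (p s : Polynomial Fq) (hp : Irreducible p) (hodd : Odd p.natDegree) (hs : ¬ p ∣ s)
    (k : Fq) (hk : k ≠ 0) (n : ℕ) :
    ∀ A B E : Polynomial Fq, E ≠ 0 → E.natDegree ≤ n →
      p * s * (A ^ 2 - C ξ * B ^ 2) = C k * E ^ 2 → False := by
  induction n using Nat.strong_induction_on with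
  | _ n ih =>
    intro A B E hE hn h
    have hpE : p ∣ E := by
      have h1 : p ∣ C k * E ^ 2 := by
        rw [← h, mul_assoc]
        exact dvd_mul_right _ _
      rcases hp.prime.dvd_or_dvd h1 with h2 | h2
      · exact absurd (isUnit_of_dvd_unit h2 (isUnit_C.mpr (isUnit_iff_ne_zero.mpr hk)))
          hp.not_isUnit
      · exact hp.prime.dvd_of_dvd_pow h2
    obtain ⟨E', rfl⟩ := hpE
    have hE' : E' ≠ 0 := right_ne_zero_of_mul hE
    have h3 : s * (A ^ 2 - C ξ * B ^ 2) = p * (C k * E' ^ 2) := by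
      apply mul_left_cancel₀ hp.ne_zero
      linear_combination h
    have h4 : p ∣ A ^ 2 - C ξ * B ^ 2 := by
      have : p ∣ s * (A ^ 2 - C ξ * B ^ 2) := by
        rw [h3]
        exact dvd_mul_right _ _
      exact (hp.prime.dvd_or_dvd this).resolve_left hs
    obtain ⟨⟨A', rfl⟩, ⟨B', rfl⟩⟩ := aux_dvd ξ hns p hp hodd A B h4
    have hdeg : (p * E').natDegree = p.natDegree + E'.natDegree :=
      natDegree_mul hp.ne_zero hE'
    have hpos := hodd.pos
    refine ih E'.natDegree (by omega) A' B' E' hE' le_rfl ?_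
    apply mul_left_cancel₀ (pow_ne_zero 2 hp.ne_zero)
    linear_combination h

/-- The norm form on the span of `j, k` represents no nonzero constant. -/
lemma aux_main {Fq : Type*} [Field Fq] (ξ : Fq) (hns : ¬ ∃ u : Fq, u ^ 2 = ξ)
    (S : Finset (Polynomial Fq)) (hS : S.Nonempty)
    (hSmi : ∀ f ∈ S, f.Monic ∧ Irreducible f ∧ Odd f.natDegree)
    (x y : RatFunc Fq) (c : Fq) (hc : c ≠ 0)
    (h : - algebraMap (Polynomial Fq) (RatFunc Fq) (∏ f ∈ S, f) * x ^ 2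
      + RatFunc.C ξ * algebraMap (Polynomial Fq) (RatFunc Fq) (∏ f ∈ S, f) * y ^ 2
      = RatFunc.C c) : False := by
  classical
  obtain ⟨p, hpS⟩ := hS
  obtain ⟨hpm, hpi, hpo⟩ := hSmi p hpS
  have hs : ¬ p ∣ ∏ f ∈ S.erase p, f := by
    intro hd
    obtain ⟨g, hg, hpg⟩ := (hpi.prime.dvd_finsetProd_iff _).mp hd
    obtain ⟨hgne, hgS⟩ := Finset.mem_erase.mp hg
    obtain ⟨hgm, hgi, -⟩ := hSmi g hgS
    exact hgne (eq_of_monic_of_associated hgm hpm (hpi.associated_of_dvd hgi hpg).symm)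
  rw [← Finset.mul_prod_erase S _ hpS] at h
  obtain ⟨a, b, hb, rfl⟩ := IsFractionRing.div_surjective (A := Polynomial Fq) x
  obtain ⟨d, e, he, rfl⟩ := IsFractionRing.div_surjective (A := Polynomial Fq) y
  have hb0 : b ≠ 0 := nonZeroDivisors.ne_zero hb
  have he0 : e ≠ 0 := nonZeroDivisors.ne_zero he
  have hb1 : algebraMap (Polynomial Fq) (RatFunc Fq) b ≠ 0 := by simpa using hb0
  have he1 : algebraMap (Polynomial Fq) (RatFunc Fq) e ≠ 0 := by simpa using he0
  refine aux_descent ξ hns p _ hpi hpo hs (-c) (neg_ne_zero.mpr hc) _ (a * e) (d * b) (b * e)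
    (mul_ne_zero hb0 he0) le_rfl ?_
  apply RatFunc.algebraMap_injective Fq
  simp only [map_mul, map_sub, map_pow, map_neg, RatFunc.algebraMap_C] at h ⊢
  field_simp at h
  linear_combination -h

/-- Let `q` be an odd prime power, `ξ ∈ 𝔽_q^×` a non-square, and
`𝔯 ∈ 𝔽_q[T]` a product of at least one and finitely many pairwise distinct monic
irreducible polynomials of odd degree.  Then no `γ ∈ H(ξ,𝔯)` satisfies both
`γ·i = −(i·γ)` and `Nr(γ) ∈ 𝔽_q^×`.  In particular, `i` and `−i` are not conjugate
by any unit of the `𝔽_q[T]`-order `Λ`. -/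
theorem no_anticommuting_unit
    (Fq : Type*) [Field Fq] [Fintype Fq] (hodd : Odd (Fintype.card Fq))
    (ξ : Fq) (hξ : ξ ≠ 0) (hns : ¬ ∃ u : Fq, u ^ 2 = ξ)
    (S : Finset (Polynomial Fq)) (hS : S.Nonempty)
    (hSmi : ∀ f ∈ S, f.Monic ∧ Irreducible f ∧ Odd f.natDegree)
    (r : Polynomial Fq) (hr : r = ∏ f ∈ S, f) :
    let i : ℍ[RatFunc Fq, RatFunc.C ξ, algebraMap (Polynomial Fq) (RatFunc Fq) r] :=
      ⟨0, 1, 0, 0⟩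
    (¬ ∃ γ : ℍ[RatFunc Fq, RatFunc.C ξ, algebraMap (Polynomial Fq) (RatFunc Fq) r],
        γ * i = -(i * γ) ∧
        ∃ c : Fq, c ≠ 0 ∧
          quatNr (RatFunc.C ξ) (algebraMap (Polynomial Fq) (RatFunc Fq) r) γ
            = RatFunc.C c) ∧
    ¬ ∃ γ δ : ℍ[RatFunc Fq, RatFunc.C ξ, algebraMap (Polynomial Fq) (RatFunc Fq) r],
        memLambda γ ∧ memLambda δ ∧ γ * δ = 1 ∧ δ * γ = 1 ∧ γ * i * δ = -i := by
  have key : ∀ γ : ℍ[RatFunc Fq, RatFunc.C ξ, algebraMap (Polynomial Fq) (RatFunc Fq) r],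
      γ * ⟨0, 1, 0, 0⟩ = -((⟨0, 1, 0, 0⟩ : ℍ[RatFunc Fq, RatFunc.C ξ,
        algebraMap (Polynomial Fq) (RatFunc Fq) r]) * γ) →
      ∀ c : Fq, c ≠ 0 →
        quatNr (RatFunc.C ξ) (algebraMap (Polynomial Fq) (RatFunc Fq) r) γ
            = RatFunc.C c → False := by
    have h2 : (2 : RatFunc Fq) ≠ 0 := by
      have h2' : (2 : Fq) ≠ 0 := by
        apply Ring.two_ne_zero
        intro h
        have := FiniteField.even_card_iff_char_two.mp h
        rcases hodd with ⟨m, hm⟩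
        omega
      intro h
      apply h2'
      apply (RatFunc.C : Fq →+* RatFunc Fq).injective
      rw [map_ofNat, map_zero]
      exact h
    have hξ' : (RatFunc.C ξ : RatFunc Fq) ≠ 0 := by
      simpa using hξ
    rintro ⟨a, b, x, y⟩ hγ c hc hN
    have e1 := congrArg QuaternionAlgebra.re hγ
    have e2 := congrArg QuaternionAlgebra.imI hγ
    simp at e1 e2
    have hb : b = 0 := by
      have : 2 * RatFunc.C ξ * b = 0 := by linear_combination e1
      exact (mul_eq_zero.mp this).resolve_left (mul_ne_zero h2 hξ')
    have ha : a = 0 := by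
      have : 2 * a = 0 := by linear_combination e2
      exact (mul_eq_zero.mp this).resolve_left h2
    subst hr ha hb
    refine aux_main ξ hns S hS hSmi x y c hc ?_
    simp only [quatNr] at hN
    linear_combination hN
  intro i
  refine ⟨?_, ?_⟩
  · rintro ⟨γ, hγ, c, hc, hN⟩
    exact key γ hγ c hc hN
  · rintro ⟨γ, δ, hγ, hδ, h1, h2, h3⟩
    have hanti : γ * i = -(i * γ) := by
      calc γ * i = γ * i * (δ * γ) := by rw [h2, mul_one]
        _ = (γ * i * δ) * γ := by simp only [mul_assoc]
        _ = -(i * γ) := by rw [h3, neg_mul]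
    have hpoly : ∀ x : ℍ[RatFunc Fq, RatFunc.C ξ, algebraMap (Polynomial Fq) (RatFunc Fq) r],
        memLambda x → ∃ P : Polynomial Fq, algebraMap (Polynomial Fq) (RatFunc Fq) P =
          quatNr (RatFunc.C ξ) (algebraMap (Polynomial Fq) (RatFunc Fq) r) x := by
      rintro ⟨x1, x2, x3, x4⟩ ⟨⟨y1, e1⟩, ⟨y2, e2⟩, ⟨y3, e3⟩, ⟨y4, e4⟩⟩
      simp only at e1 e2 e3 e4
      subst e1 e2 e3 e4
      refine ⟨y1 ^ 2 - C ξ * y2 ^ 2 - r * y3 ^ 2 + C ξ * r * y4 ^ 2, ?_⟩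
      simp only [quatNr, map_mul, map_sub, map_add, map_pow, RatFunc.algebraMap_C]
    have hmul : ∀ x y : ℍ[RatFunc Fq, RatFunc.C ξ, algebraMap (Polynomial Fq) (RatFunc Fq) r],
        quatNr (RatFunc.C ξ) (algebraMap (Polynomial Fq) (RatFunc Fq) r) (x * y) =
        quatNr (RatFunc.C ξ) (algebraMap (Polynomial Fq) (RatFunc Fq) r) x *
        quatNr (RatFunc.C ξ) (algebraMap (Polynomial Fq) (RatFunc Fq) r) y := by
      rintro ⟨x1, x2, x3, x4⟩ ⟨y1, y2, y3, y4⟩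
      simp only [quatNr, QuaternionAlgebra.mk_mul_mk]
      ring
    obtain ⟨P, hP⟩ := hpoly γ hγ
    obtain ⟨Q, hQ⟩ := hpoly δ hδ
    have hPQ : P * Q = 1 := by
      apply RatFunc.algebraMap_injective Fq
      rw [map_mul, hP, hQ, ← hmul, h1, map_one]
      simp [quatNr]
    obtain ⟨c, hc, hcP⟩ := Polynomial.isUnit_iff.mp (IsUnit.of_mul_eq_one Q hPQ)
    refine key γ hanti c hc.ne_zero ?_
    rw [← hP, ← hcP, RatFunc.algebraMap_C]
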